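/- arXiv:2409.17454 — 2 statements merged into one kernel-verified Lean document; each statement's English description precedes it below -/
import Mathlib

section
/- Let p be a prime. Suppose that every finite metabelian p-group which is semi-p-abelian is also semi-p²-abelian. Then every finite metabelian p-group which is semi-p-abelian is strongly semi-p-abelian, i.e., semi-p^i-abelian for every i ≥ 1. -/
universe u

/-!
In a semi-`n`-abelian group `G` the solutions of `x ^ n = 1` form a normal subgroup `K`. Then
`x ^ m` is trivial in `G ⧸ K` exactly when `x ^ (m * n) = 1` in `G`, and `a ^ m * b ^ m` is trivial
in `G ⧸ K` exactly when `a ^ (m * n) * b ^ (m * n) = 1` in `G`. Hence `G ⧸ K` is semi-`m`-abelian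
if and only if `G` is semi-`m * n`-abelian. For `m = n` the hypothesis on `n ^ 2` says that `G ⧸ K`
is again semi-`n`-abelian; by induction it is semi-`n ^ i`-abelian, so that `G` is
semi-`n ^ (i + 1)`-abelian.
-/

/-- The notion of a semi-`n`-abelian group, for an arbitrary exponent `n` rather than only for
powers of a prime. -/
def IsSemiAbelian (n : ℕ) (G : Type*) [Group G] : Prop :=
  ∀ a b : G, (a * b) ^ n = 1 ↔ a ^ n * b ^ n = 1

namespace IsSemiAbelian

variable {G : Type*} [Group G] {n : ℕ}

/-- The kernel of `x ↦ x ^ n` on a semi-`n`-abelian group, by which one divides to lower the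
exponent. It is a subgroup although `x ↦ x ^ n` need not be a homomorphism. -/
def powKer (h : IsSemiAbelian n G) : Subgroup G where
  carrier := {x | x ^ n = 1}
  one_mem' := one_pow n
  mul_mem' {a b} (ha : a ^ n = 1) (hb : b ^ n = 1) := (h a b).2 (by rw [ha, hb, one_mul])
  inv_mem' {a} (ha : a ^ n = 1) := show a⁻¹ ^ n = 1 by rw [inv_pow, ha, inv_one]

lemma mem_powKer (h : IsSemiAbelian n G) {x : G} : x ∈ h.powKer ↔ x ^ n = 1 := Iff.rfl

instance normal_powKer (h : IsSemiAbelian n G) : h.powKer.Normal where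
  conj_mem x hx g := by
    rw [mem_powKer] at hx ⊢
    rw [conj_pow, hx, mul_one, mul_inv_cancel]

lemma quotient_powKer_iff (h : IsSemiAbelian n G) (m : ℕ) :
    IsSemiAbelian m (G ⧸ h.powKer) ↔ IsSemiAbelian (m * n) G := by
  have mk_pow_eq_one (x : G) : (x : G ⧸ h.powKer) ^ m = 1 ↔ x ^ (m * n) = 1 := by
    rw [← QuotientGroup.mk_pow, QuotientGroup.eq_one_iff, mem_powKer, pow_mul]
  have mk_pow_mul_mk_pow_eq_one (x y : G) :
      (x : G ⧸ h.powKer) ^ m * (y : G ⧸ h.powKer) ^ m = 1 ↔ x ^ (m * n) * y ^ (m * n) = 1 := by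
    rw [← QuotientGroup.mk_pow, ← QuotientGroup.mk_pow, ← QuotientGroup.mk_mul,
      QuotientGroup.eq_one_iff, mem_powKer, h, pow_mul, pow_mul]
  unfold IsSemiAbelian
  rw [QuotientGroup.mk_surjective.forall₂]
  refine forall₂_congr fun a b => ?_
  rw [← QuotientGroup.mk_mul, mk_pow_eq_one, mk_pow_mul_mk_pow_eq_one]

end IsSemiAbelian

lemma isMulCommutative_commutator_of_surjective {G H : Type*} [Group G] [Group H]
    [IsMulCommutative (commutator G)] {f : G →* H} (hf : Function.Surjective f) :
    IsMulCommutative (commutator H) := by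
  have map_eq : (commutator G).map f = commutator H := by
    rw [map_commutator_eq, MonoidHom.range_eq_top.2 hf, commutator_def]
  exact map_eq ▸ inferInstance

theorem metabelian_semi_p2_implies_strongly_general (n : ℕ)
    (P : ∀ (G : Type u) [Group G], Prop)
    (quotient : ∀ (G : Type u) [Group G] (N : Subgroup G) [N.Normal], P G → P (G ⧸ N))
    (semi_sq : ∀ (G : Type u) [Group G], P G → IsSemiAbelian n G → IsSemiAbelian (n ^ 2) G) :
    ∀ (G : Type u) [Group G], P G → IsSemiAbelian n G → ∀ i : ℕ, IsSemiAbelian (n ^ i) G := by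
  intro G _ hP h i
  induction i generalizing G with
  | zero => simp [IsSemiAbelian]
  | succ i ih =>
    have h_quotient : IsSemiAbelian n (G ⧸ h.powKer) := by
      rw [h.quotient_powKer_iff, ← sq]
      exact semi_sq G hP h
    rw [pow_succ, ← h.quotient_powKer_iff]
    exact ih _ (quotient G _ hP) h_quotient

/-- If every finite metabelian semi-p-abelian p-group is semi-`p²`-abelian, then every
finite metabelian semi-p-abelian p-group is strongly semi-p-abelian. -/
theorem metabelian_semi_p2_implies_strongly (p : ℕ) [Fact p.Prime]
    (hyp : ∀ (G : Type u) [Group G] [Finite G], IsPGroup p G →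
      (∀ x y : ↥(commutator G), x * y = y * x) →
      (∀ a b : G, (a * b) ^ p = 1 ↔ a ^ p * b ^ p = 1) →
      (∀ a b : G, (a * b) ^ (p ^ 2) = 1 ↔ a ^ (p ^ 2) * b ^ (p ^ 2) = 1)) :
    ∀ (G : Type u) [Group G] [Finite G], IsPGroup p G →
      (∀ x y : ↥(commutator G), x * y = y * x) →
      (∀ a b : G, (a * b) ^ p = 1 ↔ a ^ p * b ^ p = 1) →
      ∀ i : ℕ, 1 ≤ i →
        ∀ a b : G, (a * b) ^ (p ^ i) = 1 ↔ a ^ (p ^ i) * b ^ (p ^ i) = 1 := by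
  intro G _ _ hG hcomm h i _
  exact metabelian_semi_p2_implies_strongly_general p
    (fun G _ => Finite G ∧ IsPGroup p G ∧ IsMulCommutative (commutator G))
    (fun _ _ N _ ⟨_, hG, _⟩ => ⟨inferInstance, hG.to_quotient N,
      isMulCommutative_commutator_of_surjective (QuotientGroup.mk'_surjective N)⟩)
    (fun G _ ⟨_, hG, hcomm⟩ => hyp G hG (isMulCommutative_iff.1 hcomm))
    G ⟨inferInstance, hG, isMulCommutative_iff.2 hcomm⟩ h i
end

section
/- Let G be a finite 3-group which is semi-3-abelian and let x ∈ Ω₁(G). Then for all a, b ∈ G, [x,b,a] · [x,a,b] = 1, i.e., [[x,b],a] = ([[x,a],b])⁻¹. -/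
/-!
The elements `x` with `(x * a) ^ 3 = a ^ 3` for all `a` form a normal subgroup `P`, and in a
semi-3-abelian group `Ω₁(G) ≤ P`. Writing out the cube gives `x * x₁ * x₂ = 1` for `x ∈ P`, where
`xᵢ = aⁱ x a⁻ⁱ`. Comparing this with the same relation for `x⁻¹` shows that `x` commutes with its
conjugates, so that its normal closure `N ≤ P` is abelian, and since `x ^ 3 = 1` the relation then
says `[x,a⁻¹,a⁻¹] = 1`. Thus every `g ∈ G` acts on `N` by an endomorphism with `(g - 1) ^ 2 = 0`,
and these identities for `a`, `b` and their product force `a - 1` and `b - 1` to anticommute.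
-/

/-- The commutator `[x,y] = x⁻¹ * y⁻¹ * x * y`. -/
def commElt {G : Type*} [Group G] (x y : G) : G := x⁻¹ * y⁻¹ * x * y

theorem sub_one_mul_sub_one_add_swap_eq_zero_of_sq_eq_zero {R : Type*} [Ring R] {g h : R}
    (hg : (g - 1) ^ 2 = 0) (hh : (h - 1) ^ 2 = 0) (hgh : (g * h - 1) ^ 2 = 0) :
    (g - 1) * (h - 1) + (h - 1) * (g - 1) = 0 := by
  have two_sub_mul_self : (2 - g) * g = 1 := by
    rw [← sub_eq_zero, ← neg_eq_zero, ← hg]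
    noncomm_ring
  have self_mul_two_sub : h * (2 - h) = 1 := by
    rw [← sub_eq_zero, ← neg_eq_zero, ← hh]
    noncomm_ring
  have sq_mul : g * h * (g * h) = 2 * (g * h) - 1 := by
    rw [← sub_eq_zero, ← hgh]
    noncomm_ring
  have swap : h * g = 2 - (2 - g) * (2 - h) :=
    calc h * g = (2 - g) * g * (h * g) * (h * (2 - h)) := by
          rw [two_sub_mul_self, self_mul_two_sub, one_mul, mul_one]
      _ = (2 - g) * (g * h * (g * h)) * (2 - h) := by simp only [mul_assoc]
      _ = 2 * ((2 - g) * g * (h * (2 - h))) - (2 - g) * (2 - h) := by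
          rw [sq_mul]
          noncomm_ring
      _ = 2 - (2 - g) * (2 - h) := by
          rw [two_sub_mul_self, self_mul_two_sub, mul_one, mul_one]
  rw [sub_one_mul, sub_one_mul, mul_sub_one, mul_sub_one, swap, ← one_add_one_eq_two]
  noncomm_ring

section

variable {G : Type*} [Group G]

section

open scoped IsMulCommutative

variable (N : Subgroup G) [N.Normal] [IsMulCommutative N]

/-- The conjugation representation of `G` on an abelian normal subgroup `N`, which has to be
written additively so that its endomorphisms form a ring. It turns the commutator `[n,g]` into
`(g⁻¹ - 1) n`. -/
def conjRepresentation : Representation ℤ G (Additive N) :=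
  (Representation.ofMulDistribMulAction (ConjAct G) N).comp ConjAct.toConjAct.toMonoidHom

theorem coe_conjRepresentation_inv_sub_one_apply (g : G) (n : Additive N) :
    (((conjRepresentation N g⁻¹ - 1) n).toMul : G) = commElt (n.toMul : G) g := by
  have sub_apply : (conjRepresentation N g⁻¹ - 1) n = -n + conjRepresentation N g⁻¹ n := by
    rw [LinearMap.sub_apply, Module.End.one_apply, neg_add_eq_sub]
  have coe_apply : ((conjRepresentation N g⁻¹ n).toMul : G) = g⁻¹ * n.toMul * g⁻¹⁻¹ := rfl
  rw [sub_apply, toMul_add, Subgroup.coe_mul, coe_apply, toMul_neg, Subgroup.coe_inv, inv_inv,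
    commElt, mul_assoc, mul_assoc, mul_assoc]

variable {N}

theorem commElt_mul_commElt_swap_eq_one_of_commElt_commElt_self
    (hN : ∀ n ∈ N, ∀ g : G, commElt (commElt n g) g = 1) {x : G} (hx : x ∈ N) (a b : G) :
    commElt (commElt x b) a * commElt (commElt x a) b = 1 := by
  have sq_eq_zero (g : G) : (conjRepresentation N g⁻¹ - 1) ^ 2 = 0 := by
    refine LinearMap.ext fun n => Additive.toMul.injective (Subtype.ext ?_)
    rw [pow_two, Module.End.mul_apply, coe_conjRepresentation_inv_sub_one_apply,
      coe_conjRepresentation_inv_sub_one_apply, hN _ n.toMul.2]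
    rfl
  have anticomm := sub_one_mul_sub_one_add_swap_eq_zero_of_sq_eq_zero (sq_eq_zero a) (sq_eq_zero b)
    (by rw [← map_mul, ← mul_inv_rev, sq_eq_zero])
  have anticomm_apply := congrArg (fun f => ((f (.ofMul ⟨x, hx⟩)).toMul : G)) anticomm
  simpa only [LinearMap.add_apply, Module.End.mul_apply, toMul_add, Subgroup.coe_mul,
    coe_conjRepresentation_inv_sub_one_apply, toMul_ofMul, LinearMap.zero_apply, toMul_zero,
    Subgroup.coe_one] using anticomm_apply

end

theorem isMulCommutative_normalClosure_singleton {x : G}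
    (hx : ∀ g : G, Commute x (g * x * g⁻¹)) :
    IsMulCommutative (Subgroup.normalClosure {x}) := by
  refine Subgroup.isMulCommutative_closure fun y hy z hz => ?_
  simp only [Group.mem_conjugatesOfSet_iff, Set.mem_singleton_iff, exists_eq_left,
    isConj_iff] at hy hz
  obtain ⟨c, rfl⟩ := hy
  obtain ⟨d, rfl⟩ := hz
  have hconj := (Commute.conj_iff c).mpr (hx (c⁻¹ * d))
  simpa [mul_assoc] using hconj.eq

variable (G) in
/-- The periods of the `n`-th power map of `G`: the elements by which one may multiply without
changing any `n`-th power. In a semi-`n`-abelian group every `x` with `x ^ n = 1` is one. -/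
def powPeriods (n : ℕ) : Subgroup G where
  carrier := {x | ∀ a, (x * a) ^ n = a ^ n}
  one_mem' a := by rw [one_mul]
  mul_mem' {x y} hx hy a := by rw [mul_assoc, hx, hy]
  inv_mem' {x} hx a := by rw [← hx, mul_inv_cancel_left]

instance normal_powPeriods (n : ℕ) : (powPeriods G n).Normal where
  conj_mem x hx g a := by
    have conj_mul : g * x * g⁻¹ * a = g * (x * (g⁻¹ * a * g)) * g⁻¹ := by group
    have conj_inv_conj : g * (g⁻¹ * a * g) * g⁻¹ = a := by group
    rw [conj_mul, conj_pow, hx, ← conj_pow, conj_inv_conj]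

theorem pow_eq_one_of_mem_powPeriods {n : ℕ} {x : G} (hx : x ∈ powPeriods G n) : x ^ n = 1 := by
  simpa using hx 1

theorem closure_pow_eq_one_le_powPeriods {n : ℕ}
    (hsemi : ∀ a b : G, (a * b) ^ n = 1 → a ^ n * b ^ n = 1) :
    Subgroup.closure {g : G | g ^ n = 1} ≤ powPeriods G n := by
  refine (Subgroup.closure_le _).mpr fun x hx a => ?_
  have hxa : (x * a) ^ n * a⁻¹ ^ n = 1 := hsemi _ _ (by rwa [mul_inv_cancel_right])
  rwa [inv_pow, mul_inv_eq_one] at hxa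

theorem mul_conj_mul_conj_eq_one_of_mem_powPeriods {x : G} (hx : x ∈ powPeriods G 3) (a : G) :
    x * (a * x * a⁻¹) * (a * (a * x * a⁻¹) * a⁻¹) = 1 :=
  calc _ = (x * a) ^ 3 * (a ^ 3)⁻¹ := by simp only [pow_three]; group
    _ = 1 := by rw [hx, mul_inv_cancel]

theorem commute_conj_of_mem_powPeriods {x : G} (hx : x ∈ powPeriods G 3) (a : G) :
    Commute x (a * x * a⁻¹) := by
  have forward := mul_conj_mul_conj_eq_one_of_mem_powPeriods hx a
  have backward : a * (a * x * a⁻¹) * a⁻¹ * (a * x * a⁻¹ * x) = 1 := by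
    have hinv := mul_conj_mul_conj_eq_one_of_mem_powPeriods (inv_mem hx) a
    rw [← inv_eq_one, ← hinv]
    group
  exact (eq_inv_of_mul_eq_one_left forward).trans (eq_inv_of_mul_eq_one_right backward).symm

theorem commElt_commElt_self_of_mem_powPeriods {x : G} (hx : x ∈ powPeriods G 3) (g : G) :
    commElt (commElt x g) g = 1 := by
  set y := g⁻¹ * x * g with hy
  have hprod : x * y * (g⁻¹ * y * g) = 1 := by
    simpa only [inv_inv] using mul_conj_mul_conj_eq_one_of_mem_powPeriods hx g⁻¹
  have hcomm : Commute x y := by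
    simpa only [inv_inv] using commute_conj_of_mem_powPeriods hx g⁻¹
  have hcube : y ^ 3 = 1 := by
    simpa only [inv_inv] using
      pow_eq_one_of_mem_powPeriods ((normal_powPeriods 3).conj_mem x hx g⁻¹)
  calc commElt (commElt x g) g = y⁻¹ * x * y⁻¹ * (g⁻¹ * y * g) := by
        rw [hy, commElt, commElt]
        group
    _ = y⁻¹ * x * y⁻¹ * (x * y)⁻¹ := by rw [eq_inv_of_mul_eq_one_right hprod]
    _ = x * y⁻¹ * y⁻¹ * (x * y)⁻¹ := by rw [hcomm.inv_right.eq]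
    _ = x * (y ^ 3)⁻¹ * x⁻¹ := by group
    _ = 1 := by rw [hcube, inv_one, mul_one, mul_inv_cancel]

theorem commElt_mul_commElt_swap_eq_one_of_mem_powPeriods {x : G} (hx : x ∈ powPeriods G 3)
    (a b : G) : commElt (commElt x b) a * commElt (commElt x a) b = 1 := by
  have := isMulCommutative_normalClosure_singleton (commute_conj_of_mem_powPeriods hx)
  have closure_le : Subgroup.normalClosure {x} ≤ powPeriods G 3 :=
    Subgroup.normalClosure_le_normal (Set.singleton_subset_iff.mpr hx)
  exact commElt_mul_commElt_swap_eq_one_of_commElt_commElt_self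
    (fun n hn => commElt_commElt_self_of_mem_powPeriods (closure_le hn))
    (Subgroup.subset_normalClosure rfl) a b

theorem semi3abelian_omega1_comm_general
    (hsemi : ∀ a b : G, (a * b) ^ 3 = 1 → a ^ 3 * b ^ 3 = 1) {x : G}
    (hx : x ∈ Subgroup.closure {g : G | g ^ 3 = 1}) (a b : G) :
    commElt (commElt x b) a * commElt (commElt x a) b = 1 :=
  commElt_mul_commElt_swap_eq_one_of_mem_powPeriods (closure_pow_eq_one_le_powPeriods hsemi hx) a b

end

/-- In a finite semi-3-abelian 3-group, for `x ∈ Ω₁(G)` and all `a b`,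
`[x,b,a] * [x,a,b] = 1`. -/
theorem semi3abelian_omega1_comm (G : Type*) [Group G] [Finite G]
    (hG : IsPGroup 3 G)
    (hsemi : ∀ a b : G, (a * b) ^ 3 = 1 ↔ a ^ 3 * b ^ 3 = 1)
    (x : G) (hx : x ∈ Subgroup.closure {g : G | g ^ 3 = 1}) :
    ∀ a b : G, commElt (commElt x b) a * commElt (commElt x a) b = 1 :=
  semi3abelian_omega1_comm_general (fun a b => (hsemi a b).mp) hx
end
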